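/- Let x₁ ∈ ℝ³, λ > 0, q̂ ∈ ℝ with q̂ ≠ 0, and b₁, b₂, b₃, b₄ ∈ ℝ³ affinely independent points distinct from x₁. Suppose y ∈ ℝ³ and p̂ ≠ 0 satisfy q̂ e^{-√λ_k |b_j - x₁|}/(4π|b_j - x₁|) = p̂_k e^{-√λ_k |b_j - y|}/(4π|b_j - y|) for all j = 1,…,4 and for two distinct values λ₁ ≠ λ₂ of λ (with corresponding p̂_1, p̂_2). Then y = x₁. -/

import Mathlib

open Real

/-- Identifiability of a single point-source location in ℝ³ from four affinely
independent measurement points and two values of the Laplace parameter. -/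
theorem source_location_identifiable (x₁ : EuclideanSpace ℝ (Fin 3))
    (b : Fin 4 → EuclideanSpace ℝ (Fin 3)) (hb : AffineIndependent ℝ b)
    (hbx : ∀ j, b j ≠ x₁)
    (qhat : ℝ) (hq : qhat ≠ 0)
    (lam : Fin 2 → ℝ) (hlam : ∀ k, 0 < lam k) (hlamne : lam 0 ≠ lam 1)
    (y : EuclideanSpace ℝ (Fin 3)) (hby : ∀ j, b j ≠ y)
    (phat : Fin 2 → ℝ) (hp : ∀ k, phat k ≠ 0)
    (heq : ∀ k, ∀ j,
      qhat * Real.exp (-Real.sqrt (lam k) * dist (b j) x₁) / (4 * Real.pi * dist (b j) x₁) =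
        phat k * Real.exp (-Real.sqrt (lam k) * dist (b j) y) / (4 * Real.pi * dist (b j) y)) :
    y = x₁ := by
  have hr : ∀ j, 0 < dist (b j) x₁ := fun j => dist_pos.2 (hbx j)
  have hs : ∀ j, 0 < dist (b j) y := fun j => dist_pos.2 (hby j)
  have hlog : ∀ k j, Real.log qhat - Real.sqrt (lam k) * dist (b j) x₁ + Real.log (dist (b j) y)
      = Real.log (phat k) - Real.sqrt (lam k) * dist (b j) y + Real.log (dist (b j) x₁) := by
    intro k j
    have h := heq k j
    have h1 := hr j
    have h2 := hs j
    have h3 : qhat * Real.exp (-Real.sqrt (lam k) * dist (b j) x₁) * dist (b j) y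
        = phat k * Real.exp (-Real.sqrt (lam k) * dist (b j) y) * dist (b j) x₁ := by
      rw [div_eq_div_iff (by positivity) (by positivity)] at h
      have h4 : (4 * Real.pi) ≠ 0 := by positivity
      apply mul_left_cancel₀ h4
      linarith
    have h5 := congrArg Real.log h3
    rw [Real.log_mul (mul_ne_zero hq (Real.exp_ne_zero _)) h2.ne',
      Real.log_mul hq (Real.exp_ne_zero _), Real.log_exp,
      Real.log_mul (mul_ne_zero (hp k) (Real.exp_ne_zero _)) h1.ne',
      Real.log_mul (hp k) (Real.exp_ne_zero _), Real.log_exp] at h5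
    linarith
  have hmu : Real.sqrt (lam 0) - Real.sqrt (lam 1) ≠ 0 := by
    intro h
    exact hlamne ((Real.sqrt_inj (hlam 0).le (hlam 1).le).1 (by linarith))
  have hd : ∀ j, dist (b j) x₁ - dist (b j) y = dist (b 0) x₁ - dist (b 0) y := by
    intro j
    apply mul_left_cancel₀ hmu
    linarith [hlog 0 j, hlog 1 j, hlog 0 0, hlog 1 0]
  have hK : ∀ j, dist (b j) x₁ ^ 2 - dist (b j) y ^ 2 = dist (b 0) x₁ ^ 2 - dist (b 0) y ^ 2 := by
    intro j
    have hdj := hd j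
    have hl : Real.log (dist (b j) y * dist (b 0) x₁) = Real.log (dist (b 0) y * dist (b j) x₁) := by
      rw [Real.log_mul (hs j).ne' (hr 0).ne', Real.log_mul (hs 0).ne' (hr j).ne']
      have h6 : Real.sqrt (lam 0) * (dist (b j) x₁ - dist (b j) y)
          = Real.sqrt (lam 0) * (dist (b 0) x₁ - dist (b 0) y) := by rw [hdj]
      linarith [hlog 0 j, hlog 0 0]
    have hm := Real.log_injOn_pos (Set.mem_Ioi.2 (mul_pos (hs j) (hr 0)))
      (Set.mem_Ioi.2 (mul_pos (hs 0) (hr j))) hl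
    have hx : dist (b j) x₁ = dist (b j) y + (dist (b 0) x₁ - dist (b 0) y) := by linarith
    rw [hx] at hm ⊢
    linear_combination 2 * hm
  have hspan := hb.vectorSpan_eq_top_of_card_eq_finrank_add_one (by simp)
  rw [vectorSpan_range_eq_span_range_vsub_right ℝ b 0] at hspan
  have hv : ∀ v : EuclideanSpace ℝ (Fin 3), inner ℝ v (y - x₁) = 0 := by
    intro v
    have hmem : v ∈ Submodule.span ℝ (Set.range fun i : Fin 4 => b i -ᵥ b 0) := by
      rw [hspan]; trivial
    induction hmem using Submodule.span_induction with
    | mem w hw =>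
      obtain ⟨j, rfl⟩ := hw
      have h := hK j
      simp only [dist_eq_norm, @norm_sub_sq_real] at h
      simp only [vsub_eq_sub, inner_sub_left, inner_sub_right]
      linarith
    | zero => simp
    | add u w _ _ hu hw => rw [inner_add_left, hu, hw, add_zero]
    | smul a w _ hw => rw [inner_smul_left, hw, mul_zero]
  exact sub_eq_zero.1 (inner_self_eq_zero.1 (hv (y - x₁)))
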